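/- Let G ↷ (X, μ) be an aperiodic pmp action of a countable group, let ξ be a collection of Borel subsets of X, and let F be a G-invariant sub-σ-algebra. Then rh_{G,μ}(ξ | F) = inf{ H_μ(α) : α a countable Borel partition with ξ ⊆ σ_G(α) ∨ F modulo μ-null sets }. -/

import Mathlib

open MeasureTheory Set Function
open scoped ENNReal symmDiff

/-- A set in a measurable space is *analytic* if it is the image of a Borel subset of a
standard Borel space under a Borel (measurable) map. -/
def IsAnalyticS {W : Type*} [MeasurableSpace W] (A : Set W) : Prop :=
  ∃ (Z : Type) (mZ : MeasurableSpace Z), @StandardBorelSpace Z mZ ∧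
    ∃ (B : Set Z) (f : Z → W), MeasurableSet[mZ] B ∧ @Measurable Z W mZ _ f ∧ f '' B = A

/-- The smallest `G`-invariant sub-σ-algebra containing the collection `ξ`. -/
def sigmaG (G : Type*) {X : Type*} [Group G] [MulAction G X] (ξ : Set (Set X)) :
    MeasurableSpace X :=
  MeasurableSpace.generateFrom {B | ∃ (g : G), ∃ A ∈ ξ, B = (fun x => g • x) ⁻¹' A}

/-- The σ-algebra of `G`-invariant measurable sets. -/
def invSigma (G X : Type*) [Group G] [MulAction G X] [MeasurableSpace X] :
    MeasurableSpace X :=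
  MeasurableSpace.generateFrom {A | MeasurableSet A ∧ ∀ g : G, (fun x => g • x) ⁻¹' A = A}

/-- Conditional Shannon entropy `H_μ(α | m)` of a countable partition `α` given a
sub-σ-algebra `m`, valued in `[0,∞]`. -/
noncomputable def condEnt {X : Type*} (m : MeasurableSpace X) [mX : MeasurableSpace X]
    (μ : Measure X) {ι : Type*} (α : ι → Set X) : ℝ≥0∞ :=
  ∫⁻ x, ∑' i, ENNReal.ofReal
    (Real.negMulLog ((μ[(α i).indicator (fun _ => (1 : ℝ)) | m]) x)) ∂μ

/-- Shannon entropy `H_μ(α)` of a countable partition. -/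
noncomputable def shEnt {X : Type*} [MeasurableSpace X] (μ : Measure X)
    {ι : Type*} (α : ι → Set X) : ℝ≥0∞ :=
  ∑' i, ENNReal.ofReal (Real.negMulLog (μ (α i)).toReal)

/-- `α` is a countable Borel partition of `X` (indexed by `ℕ`, cells may be empty). -/
def IsPartition {X : Type*} [MeasurableSpace X] (α : ℕ → Set X) : Prop :=
  (∀ i, MeasurableSet (α i)) ∧ Pairwise (Function.onFun Disjoint α) ∧ (⋃ i, α i) = univ

/-- Every set of `ξ` agrees with an `m`-measurable set modulo `μ`-null sets. -/
def SubsetMod {X : Type*} (m : MeasurableSpace X) [mX : MeasurableSpace X] (μ : Measure X)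
    (ξ : Set (Set X)) : Prop :=
  ∀ A ∈ ξ, ∃ B, MeasurableSet[m] B ∧ μ (A ∆ B) = 0

/-- Outer Rokhlin entropy `rh_{G,μ}(ξ | F)`. -/
noncomputable def outerRokhlin (G : Type*) {X : Type*} (ξ : Set (Set X))
    (F : MeasurableSpace X) [Group G] [MulAction G X] [mX : MeasurableSpace X]
    (μ : Measure X) : ℝ≥0∞ :=
  sInf { h | ∃ α : ℕ → Set X, IsPartition α ∧
      SubsetMod (sigmaG G (Set.range α) ⊔ F ⊔ invSigma G X) μ ξ ∧
      h = condEnt (F ⊔ invSigma G X) μ α }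

/-- Rokhlin entropy `rh_G(X, μ | F)`. -/
noncomputable def rokhlin (G : Type*) {X : Type*} (F : MeasurableSpace X) [Group G]
    [MulAction G X] [mX : MeasurableSpace X] (μ : Measure X) : ℝ≥0∞ :=
  outerRokhlin G {A | MeasurableSet A} F μ

/-- Outer Rokhlin entropy `rh_{G,μ}(S | F)` of a sub-σ-algebra `S`. -/
noncomputable def outerRokhlinAlg (G : Type*) {X : Type*} (S F : MeasurableSpace X) [Group G]
    [MulAction G X] [mX : MeasurableSpace X] (μ : Measure X) : ℝ≥0∞ :=
  outerRokhlin G {A | MeasurableSet[S] A} F μ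

/-- The action of `G` on `(X, μ)` is probability-measure-preserving. -/
def IsPmp (G : Type*) {X : Type*} [Group G] [MulAction G X] [MeasurableSpace X]
    (μ : Measure X) : Prop :=
  ∀ g : G, MeasurePreserving (fun x => g • x) μ μ

/-- Aperiodicity: μ-almost-every `G`-orbit is infinite. -/
def Aperiodic (G : Type*) {X : Type*} [Group G] [MulAction G X] [MeasurableSpace X]
    (μ : Measure X) : Prop :=
  ∀ᵐ x ∂μ, (MulAction.orbit G x).Infinite

/-- Ergodicity of a measure: every invariant Borel set is null or conull. -/
def IsErgodicInv (G : Type*) {X : Type*} [Group G] [MulAction G X] [MeasurableSpace X]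
    (ν : Measure X) : Prop :=
  ∀ A : Set X, MeasurableSet A → (∀ g : G, (fun x => g • x) ⁻¹' A = A) → ν A = 0 ∨ ν A = 1

/-- `F` is a `G`-invariant σ-algebra. -/
def InvariantAlg (G : Type*) {X : Type*} (F : MeasurableSpace X) [Group G] [MulAction G X] :
    Prop :=
  ∀ (g : G) (A : Set X), MeasurableSet[F] A → MeasurableSet[F] ((fun x => g • x) ⁻¹' A)

/-- `F` is countably generated. -/
def CountablyGen {X : Type*} (F : MeasurableSpace X) : Prop :=
  ∃ S : Set (Set X), S.Countable ∧ F = MeasurableSpace.generateFrom S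

/-- `π` is an ergodic decomposition map for `μ`. -/
def IsErgDecomp (G : Type*) {X : Type*} [Group G] [MulAction G X] [MeasurableSpace X]
    (μ : Measure X) (π : X → Measure X) : Prop :=
  Measurable π ∧
  (∀ x, IsProbabilityMeasure (π x) ∧ IsPmp G (π x) ∧ IsErgodicInv G (π x)) ∧
  (∀ (g : G) (x : X), π (g • x) = π x) ∧
  (∀ ν : Measure X, IsProbabilityMeasure ν → IsPmp G ν → IsErgodicInv G ν →
      ν {x | π x = ν} = 1) ∧
  (∀ B : Set X, MeasurableSet B → μ B = ∫⁻ x, π x B ∂μ)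

/-!
Conditioning lowers entropy and adding `I_G` only helps generation, so one inequality is immediate.
Conversely, let `α` generate together with `F ∨ I_G` and have finite entropy given `F ∨ I_G`.

*Removing the conditioning.* By aperiodicity there is a marker set `M` of tiny measure meeting
every orbit; allot the points of each orbit to marker points of the same orbit. At a marker point,
store the rank of the `α`-name of its cell among all names, ordered by conditional probability
given `F ∨ I_G`. Mass transport bounds the expected logarithm of the rank by
`H(α | F ∨ I_G)`, and since the code vanishes off `M`, its entropy exceeds this bound by at most
`ε`. The code and `F ∨ I_G` together recover `α`.

*Removing `I_G`.* Modulo null sets `I_G` is generated by countably many invariant sets `C i`. An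
invariant set is the saturation of its trace on any marker set, and traces on markers of summably
small measure can be recorded as binary digits with entropy at most `ε`.
-/

section Surprisal

/-- The information content `-log q`, valued in `[0, ∞]`: it is `∞` at `q = 0` and truncated
to `0` for `1 ≤ q`. -/
noncomputable def surprisal (q : ℝ≥0∞) : ℝ≥0∞ := (-ENNReal.log q).toENNReal

lemma antitone_surprisal : Antitone surprisal := fun _ _ h =>
  EReal.toENNReal_le_toENNReal (EReal.neg_le_neg_iff.2 (ENNReal.log_le_log_iff.2 h))

lemma continuous_surprisal : Continuous surprisal :=
  EReal.continuous_toENNReal.comp (continuous_neg.comp ENNReal.continuous_log)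

@[fun_prop]
lemma measurable_surprisal : Measurable surprisal := continuous_surprisal.measurable

@[simp]
lemma surprisal_zero : surprisal 0 = ⊤ := by simp [surprisal]

@[simp]
lemma surprisal_one : surprisal 1 = 0 := by simp [surprisal]

lemma surprisal_eq_zero {q : ℝ≥0∞} (hq : 1 ≤ q) : surprisal q = 0 :=
  le_antisymm (surprisal_one ▸ antitone_surprisal hq) zero_le

lemma surprisal_ofReal {r : ℝ} (hr : 0 < r) :
    surprisal (ENNReal.ofReal r) = ENNReal.ofReal (-Real.log r) := by
  rw [surprisal, ENNReal.log_ofReal_of_pos hr, ← EReal.coe_neg, EReal.real_coe_toENNReal]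

lemma surprisal_iInf {ι : Sort*} (f : ι → ℝ≥0∞) :
    surprisal (⨅ i, f i) = ⨆ i, surprisal (f i) :=
  antitone_surprisal.map_iInf_of_continuousAt continuous_surprisal.continuousAt
    (surprisal_eq_zero le_top)

lemma surprisal_mul_le (a b : ℝ≥0∞) : surprisal (a * b) ≤ surprisal a + surprisal b := by
  rcases eq_or_ne a 0 with rfl | ha
  · simp
  rcases eq_or_ne b 0 with rfl | hb
  · simp
  rw [surprisal, ENNReal.log_mul_add,
    EReal.neg_add (.inl (ENNReal.log_eq_bot_iff.not.2 ha)) (.inr (ENNReal.log_eq_bot_iff.not.2 hb)),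
    sub_eq_add_neg]
  exact EReal.toENNReal_add_le

lemma surprisal_prod_le {ι : Type*} (s : Finset ι) (f : ι → ℝ≥0∞) :
    surprisal (∏ i ∈ s, f i) ≤ ∑ i ∈ s, surprisal (f i) := by
  classical
  induction s using Finset.induction_on with
  | empty => simp
  | insert i s hi ih =>
    rw [Finset.prod_insert hi, Finset.sum_insert hi]
    exact (surprisal_mul_le _ _).trans (by gcongr)

lemma ofReal_negMulLog_toReal (p : ℝ≥0∞) :
    ENNReal.ofReal (Real.negMulLog p.toReal) = p * surprisal p := by
  rcases eq_or_ne p 0 with rfl | hp0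
  · simp
  rcases eq_or_ne p ⊤ with rfl | hp
  · simp [surprisal_eq_zero le_top]
  have hpos : 0 < p.toReal := ENNReal.toReal_pos hp0 hp
  calc ENNReal.ofReal (Real.negMulLog p.toReal)
      = ENNReal.ofReal p.toReal * ENNReal.ofReal (-Real.log p.toReal) := by
        rw [Real.negMulLog, neg_mul_comm, ENNReal.ofReal_mul hpos.le]
    _ = p * surprisal p := by rw [← surprisal_ofReal hpos, ENNReal.ofReal_toReal hp]

lemma negMulLog_add_le {p w : ℝ} (hp : 0 < p) (hw : 0 < w) :
    p * -Real.log p + p ≤ p * -Real.log w + w := by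
  have hlog : Real.log (w / p) ≤ w / p - 1 := Real.log_le_sub_one_of_pos (div_pos hw hp)
  rw [Real.log_div hw.ne' hp.ne'] at hlog
  have := mul_le_mul_of_nonneg_left hlog hp.le
  rw [mul_sub, mul_sub, mul_div_cancel₀ _ hp.ne'] at this
  linarith

-- Gibbs' inequality before summation: adding `p` and `w`, which then cancel, avoids subtraction in
-- `[0, ∞]`.
lemma mul_surprisal_add_le {p : ℝ≥0∞} (hp : p ≤ 1) (w : ℝ≥0∞) :
    p * surprisal p + p ≤ p * surprisal w + w := by
  wlog hw1 : w ≤ 1 generalizing w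
  · have h1 := this 1 le_rfl
    rw [surprisal_one] at h1
    rw [surprisal_eq_zero (not_le.1 hw1).le]
    exact h1.trans (by gcongr; exact (not_le.1 hw1).le)
  rcases eq_or_ne p 0 with rfl | hp0
  · simp
  rcases eq_or_ne w 0 with rfl | hw0
  · simp [ENNReal.mul_top hp0]
  lift p to NNReal using ne_top_of_le_ne_top ENNReal.one_ne_top hp
  lift w to NNReal using ne_top_of_le_ne_top ENNReal.one_ne_top hw1
  have hp' : 0 < (p : ℝ) := by exact_mod_cast pos_iff_ne_zero.2 hp0
  have hw' : 0 < (w : ℝ) := by exact_mod_cast pos_iff_ne_zero.2 hw0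
  have hlogp : 0 ≤ -Real.log p := neg_nonneg.2 (Real.log_nonpos hp'.le (by exact_mod_cast hp))
  have hlogw : 0 ≤ -Real.log w := neg_nonneg.2 (Real.log_nonpos hw'.le (by exact_mod_cast hw1))
  have h := ENNReal.ofReal_le_ofReal (negMulLog_add_le hp' hw')
  rwa [ENNReal.ofReal_add (by positivity) hp'.le, ENNReal.ofReal_add (by positivity) hw'.le,
    ENNReal.ofReal_mul hp'.le, ENNReal.ofReal_mul hp'.le, ← surprisal_ofReal hp',
    ← surprisal_ofReal hw', ENNReal.ofReal_coe_nnreal, ENNReal.ofReal_coe_nnreal] at h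

lemma tsum_mul_surprisal_le {ι : Type*} {p w : ι → ℝ≥0∞} (hp : ∑' i, p i = 1)
    (hw : ∑' i, w i ≤ 1) : ∑' i, p i * surprisal (p i) ≤ ∑' i, p i * surprisal (w i) := by
  have hp1 (i : ι) : p i ≤ 1 := (ENNReal.le_tsum i).trans hp.le
  have h := ENNReal.tsum_le_tsum fun i => mul_surprisal_add_le (hp1 i) (w i)
  rw [ENNReal.tsum_add, ENNReal.tsum_add, hp] at h
  exact ENNReal.le_of_add_le_add_right ENNReal.one_ne_top (h.trans (by gcongr))

end Surprisal

section Entropy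

variable {X : Type*} [mX : MeasurableSpace X] {μ : Measure X}

lemma shEnt_eq_tsum (μ : Measure X) {ι : Type*} (α : ι → Set X) :
    shEnt μ α = ∑' i, μ (α i) * surprisal (μ (α i)) := by
  simp only [shEnt, ofReal_negMulLog_toReal]

lemma lintegral_comp_nat {b : X → ℕ} (hb : Measurable b) (f : ℕ → ℝ≥0∞) :
    ∫⁻ x, f (b x) ∂μ = ∑' n, μ (b ⁻¹' {n}) * f n := by
  rw [← lintegral_map (measurable_of_countable f) hb, lintegral_countable']
  exact tsum_congr fun n => by rw [Measure.map_apply hb (measurableSet_singleton n), mul_comm]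

lemma shEnt_fibers_eq_lintegral {b : X → ℕ} (hb : Measurable b) :
    shEnt μ (fun n => b ⁻¹' {n}) = ∫⁻ x, surprisal (μ (b ⁻¹' {b x})) ∂μ := by
  rw [shEnt_eq_tsum, lintegral_comp_nat hb fun n => surprisal (μ (b ⁻¹' {n}))]

lemma tsum_measure_fibers {b : X → ℕ} (hb : Measurable b) :
    ∑' n, μ (b ⁻¹' {n}) = μ univ := by
  simpa using (lintegral_comp_nat (μ := μ) hb 1).symm

lemma shEnt_fibers_le_lintegral [IsProbabilityMeasure μ] {b : X → ℕ} (hb : Measurable b)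
    {w : ℕ → ℝ≥0∞} (hw : ∑' n, w n ≤ 1) :
    shEnt μ (fun n => b ⁻¹' {n}) ≤ ∫⁻ x, surprisal (w (b x)) ∂μ := by
  rw [shEnt_eq_tsum, lintegral_comp_nat hb fun n => surprisal (w n)]
  exact tsum_mul_surprisal_le ((tsum_measure_fibers hb).trans measure_univ) hw

lemma shEnt_fibers_pair_le [IsProbabilityMeasure μ] {K t : X → ℕ} (hK : Measurable K)
    (ht : Measurable t) :
    shEnt μ (fun n => (fun x => Nat.pair (K x) (t x)) ⁻¹' {n}) ≤
      shEnt μ (fun n => K ⁻¹' {n}) + shEnt μ (fun n => t ⁻¹' {n}) := by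
  set w : ℕ → ℝ≥0∞ := fun n => μ (K ⁻¹' {n.unpair.1}) * μ (t ⁻¹' {n.unpair.2})
  have hw : ∑' n, w n ≤ 1 := by
    refine (Nat.pairEquiv.symm.tsum_eq fun p : ℕ × ℕ =>
      μ (K ⁻¹' {p.1}) * μ (t ⁻¹' {p.2})).trans_le ?_
    rw [ENNReal.tsum_prod']
    simp only [ENNReal.tsum_mul_left, tsum_measure_fibers hK,
      tsum_measure_fibers ht, measure_univ, mul_one, le_refl]
  calc shEnt μ (fun n => (fun x => Nat.pair (K x) (t x)) ⁻¹' {n})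
      ≤ ∫⁻ x, surprisal (w (Nat.pair (K x) (t x))) ∂μ :=
        shEnt_fibers_le_lintegral (measurable_of_countable (uncurry Nat.pair) |>.comp
          (hK.prodMk ht)) hw
    _ ≤ ∫⁻ x, surprisal (μ (K ⁻¹' {K x})) + surprisal (μ (t ⁻¹' {t x})) ∂μ :=
        lintegral_mono fun x => by
          simpa only [w, Nat.unpair_pair] using surprisal_mul_le _ _
    _ = _ := by
        rw [shEnt_fibers_eq_lintegral hK, shEnt_fibers_eq_lintegral ht, lintegral_add_left]
        exact (measurable_of_countable fun n => surprisal (μ (K ⁻¹' {n}))).comp hK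

end Entropy

section ConditionalEntropy

variable {X : Type*} {m : MeasurableSpace X} [mX : MeasurableSpace X] {μ : Measure X}

open ProbabilityTheory in
lemma lintegral_condLExp_mul (hm : m ≤ mX) [SigmaFinite (μ.trim hm)] {f g : X → ℝ≥0∞}
    (hf : Measurable f) (hg : Measurable[m] g) :
    ∫⁻ x, μ⁻[f|m] x * g x ∂μ = ∫⁻ x, f x * g x ∂μ := by
  have hc : Measurable μ⁻[f|m] := measurable_condLExp' m μ f
  have htrim : (μ.withDensity μ⁻[f|m]).trim hm = (μ.withDensity f).trim hm := by
    refine @Measure.ext X m _ _ fun s hs => ?_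
    rw [trim_measurableSet_eq hm hs, trim_measurableSet_eq hm hs, withDensity_apply _ (hm s hs),
      withDensity_apply _ (hm s hs), setLIntegral_condLExp hm μ f hs]
  calc ∫⁻ x, μ⁻[f|m] x * g x ∂μ
      = ∫⁻ x, g x ∂(μ.withDensity μ⁻[f|m]).trim hm := by
        rw [lintegral_trim hm hg, lintegral_withDensity_eq_lintegral_mul μ hc (hg.mono hm le_rfl)]
        rfl
    _ = ∫⁻ x, f x * g x ∂μ := by
        rw [htrim, lintegral_trim hm hg,
          lintegral_withDensity_eq_lintegral_mul μ hf (hg.mono hm le_rfl)]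
        rfl

/-- The conditional probability `μ(A | m)`, valued in `[0, ∞]` so that it can be integrated
without integrability side conditions. -/
noncomputable def condProb {X : Type*} (m : MeasurableSpace X) [MeasurableSpace X]
    (μ : Measure X) (A : Set X) : X → ℝ≥0∞ :=
  condLExp m μ (A.indicator 1)

lemma measurable_condProb (A : Set X) : Measurable[m] (condProb m μ A) :=
  measurable_condLExp m μ _

lemma toReal_condProb_ae_eq [IsFiniteMeasure μ] {A : Set X} (hA : MeasurableSet A) :
    (fun x => (condProb m μ A x).toReal) =ᵐ[μ] μ[A.indicator (fun _ => (1 : ℝ))|m] := by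
  have h := toReal_condLExp m (μ := μ) (measurable_one.indicator hA).aemeasurable
    (by rw [lintegral_indicator_one hA]; exact measure_ne_top μ A)
  refine h.trans (.of_eq (congrArg (fun f => μ[f|m]) (funext fun x => ?_)))
  by_cases hx : x ∈ A <;> simp [hx]

lemma lintegral_condProb (hm : m ≤ mX) [SigmaFinite (μ.trim hm)] {A : Set X}
    (hA : MeasurableSet A) : ∫⁻ x, condProb m μ A x ∂μ = μ A := by
  rw [condProb, lintegral_condLExp hm, lintegral_indicator_one hA]

lemma condProb_le_one (hm : m ≤ mX) [SigmaFinite (μ.trim hm)] (A : Set X) :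
    ∀ᵐ x ∂μ, condProb m μ A x ≤ 1 := by
  have h := condLExp_mono (mΩ := m) (P := μ) (ae_of_all μ fun x : X =>
    indicator_le_self' (s := A) (f := (1 : X → ℝ≥0∞)) (fun _ _ => zero_le) x)
  rwa [condLExp_one hm] at h

lemma tsum_condProb_le_one (hm : m ≤ mX) [SigmaFinite (μ.trim hm)] {ι : Type*} [Countable ι]
    {A : ι → Set X} (hA : ∀ i, MeasurableSet (A i)) (hdisj : Pairwise (onFun Disjoint A)) :
    ∀ᵐ x ∂μ, ∑' i, condProb m μ (A i) x ≤ 1 := by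
  have hsum := condLExp_tsum (P := μ) m fun i =>
    ((measurable_one (α := ℝ≥0∞)).indicator (hA i)).aemeasurable
  have hle (x : X) : (∑' i, (A i).indicator (1 : X → ℝ≥0∞)) x ≤ (1 : X → ℝ≥0∞) x := by
    rw [ENNReal.tsum_apply]
    by_cases hx : ∃ i, x ∈ A i
    · obtain ⟨i, hi⟩ := hx
      rw [tsum_eq_single i fun j hj =>
        indicator_of_notMem (fun hjx => (hdisj hj).le_bot ⟨hjx, hi⟩) _]
      exact indicator_le_self' (fun _ _ => zero_le) x
    · push Not at hx
      simp [hx]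
  have hmono := condLExp_mono (mΩ := m) (ae_of_all μ hle)
  rw [condLExp_one hm] at hmono
  filter_upwards [hsum, hmono] with x hx hx1
  rw [ENNReal.tsum_apply] at hx
  exact hx ▸ hx1

lemma condEnt_eq_lintegral [IsFiniteMeasure μ] {ι : Type*} [Countable ι] {α : ι → Set X}
    (hα : ∀ i, MeasurableSet (α i)) :
    condEnt m μ α = ∫⁻ x, ∑' i, condProb m μ (α i) x * surprisal (condProb m μ (α i) x) ∂μ := by
  refine lintegral_congr_ae ?_
  filter_upwards [ae_all_iff.2 fun i => toReal_condProb_ae_eq (m := m) (μ := μ) (hα i)] with x hx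
  exact tsum_congr fun i => by rw [← hx i, ofReal_negMulLog_toReal]

lemma condEnt_eq_tsum (hm : m ≤ mX) [IsFiniteMeasure μ] {ι : Type*} [Countable ι] {α : ι → Set X}
    (hα : ∀ i, MeasurableSet (α i)) :
    condEnt m μ α = ∑' i, ∫⁻ x, condProb m μ (α i) x * surprisal (condProb m μ (α i) x) ∂μ := by
  rw [condEnt_eq_lintegral hα, lintegral_tsum fun i => ?_]
  have h := (measurable_condProb (m := m) (μ := μ) (α i)).mono hm le_rfl
  fun_prop

lemma condEnt_le_shEnt (hm : m ≤ mX) [IsProbabilityMeasure μ] {ι : Type*} [Countable ι]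
    {α : ι → Set X} (hα : ∀ i, MeasurableSet (α i)) : condEnt m μ α ≤ shEnt μ α := by
  rw [condEnt_eq_tsum hm hα, shEnt_eq_tsum]
  refine ENNReal.tsum_le_tsum fun i => ?_
  have hmeas := (measurable_condProb (m := m) (μ := μ) (α i)).mono hm le_rfl
  have hgibbs : ∫⁻ x, (condProb m μ (α i) x * surprisal (condProb m μ (α i) x) +
      condProb m μ (α i) x) ∂μ ≤
      ∫⁻ x, (condProb m μ (α i) x * surprisal (μ (α i)) + μ (α i)) ∂μ :=
    lintegral_mono_ae <| (condProb_le_one hm (μ := μ) (α i)).mono fun x hx =>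
      mul_surprisal_add_le hx (μ (α i))
  rw [lintegral_add_right _ hmeas, lintegral_add_right _ measurable_const,
    lintegral_mul_const _ hmeas, lintegral_condProb hm (hα i), lintegral_const, measure_univ,
    mul_one] at hgibbs
  exact ENNReal.le_of_add_le_add_right (measure_ne_top μ (α i)) hgibbs

lemma lintegral_surprisal_condProb_fiber (hm : m ≤ mX) [IsFiniteMeasure μ] {a : X → ℕ}
    (ha : Measurable a) :
    ∫⁻ x, surprisal (condProb m μ (a ⁻¹' {a x}) x) ∂μ = condEnt m μ (fun i => a ⁻¹' {i}) := by
  have hfib (i : ℕ) : MeasurableSet (a ⁻¹' {i}) := ha (measurableSet_singleton i)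
  have hS (i : ℕ) : Measurable[m] fun x => surprisal (condProb m μ (a ⁻¹' {i}) x) :=
    measurable_surprisal.comp (measurable_condProb _)
  calc ∫⁻ x, surprisal (condProb m μ (a ⁻¹' {a x}) x) ∂μ
      = ∫⁻ x, ∑' i, (a ⁻¹' {i}).indicator 1 x * surprisal (condProb m μ (a ⁻¹' {i}) x) ∂μ :=
        lintegral_congr fun x => by
          rw [tsum_eq_single (a x) fun i hi => by simp [hi.symm]]
          simp
    _ = ∑' i, ∫⁻ x, (a ⁻¹' {i}).indicator 1 x * surprisal (condProb m μ (a ⁻¹' {i}) x) ∂μ :=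
        lintegral_tsum fun i => ((measurable_one.indicator (hfib i)).mul
          ((hS i).mono hm le_rfl)).aemeasurable
    _ = condEnt m μ (fun i => a ⁻¹' {i}) := by
        rw [condEnt_eq_tsum hm hfib]
        exact tsum_congr fun i =>
          (lintegral_condLExp_mul hm (measurable_one.indicator (hfib i)) (hS i)).symm

lemma measurableSet_tsum_le {Y : Type*} {_ : MeasurableSpace Y} {f : ℕ → Y → ℝ≥0∞}
    (hf : ∀ i, Measurable (f i)) (c : ℝ≥0∞) : MeasurableSet {y | ∑' i, f i y ≤ c} :=
  Measurable.tsum hf measurableSet_Iic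

lemma exists_weights_lintegral_eq_condEnt (hm : m ≤ mX) [IsFiniteMeasure μ] {a : X → ℕ}
    (ha : Measurable a) :
    ∃ q : ℕ → X → ℝ≥0∞, (∀ i, Measurable[m] (q i)) ∧ (∀ x, ∑' i, q i x ≤ 1) ∧
      ∫⁻ x, surprisal (q (a x) x) ∂μ = condEnt m μ (fun i => a ⁻¹' {i}) := by
  have hp (i : ℕ) : Measurable[m] (condProb m μ (a ⁻¹' {i})) := measurable_condProb _
  set S : Set X := {x | ∑' i, condProb m μ (a ⁻¹' {i}) x ≤ 1}
  have hS : MeasurableSet[m] S := measurableSet_tsum_le hp 1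
  have hSae : ∀ᵐ x ∂μ, x ∈ S := tsum_condProb_le_one hm
    (fun i => ha (measurableSet_singleton i)) (pairwise_disjoint_fiber a)
  refine ⟨fun i => S.indicator (condProb m μ (a ⁻¹' {i})), fun i => (hp i).indicator hS,
    fun x => ?_, ?_⟩
  · by_cases hx : x ∈ S
    · simp only [indicator_of_mem hx]
      exact hx
    · simp [hx]
  · rw [← lintegral_surprisal_condProb_fiber hm ha]
    refine lintegral_congr_ae ?_
    filter_upwards [hSae] with x hx
    rw [indicator_of_mem hx]

end ConditionalEntropy

section EntropyOfNatValued

lemma exists_pos_add_mul_le_one {r S : ℝ} (hr : r < 1) (hS : 0 ≤ S) :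
    ∃ c : ℝ, 0 < c ∧ r + c * S ≤ 1 := by
  have hS1 : 0 < S + 1 := by linarith
  refine ⟨(1 - r) / (S + 1), div_pos (sub_pos.2 hr) hS1, ?_⟩
  have : (1 - r) / (S + 1) * S ≤ 1 - r := by
    rw [div_mul_eq_mul_div, div_le_iff₀ hS1]
    nlinarith
  linarith

lemma exists_power_law_weights {δ : NNReal} (hδ : 0 < δ) :
    ∃ w : ℕ → ℝ≥0∞, ∑' k, w k ≤ 1 ∧ surprisal (w 0) ≤ δ ∧ ∃ C : ℝ≥0∞, C ≠ ⊤ ∧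
      ∀ k ≠ 0, surprisal (w k) ≤ C + (1 + δ) * ENNReal.ofReal (Real.log k) := by
  set r : ℝ := Real.exp (-δ)
  set f : ℕ → ℝ := fun k => (k : ℝ) ^ (-(1 + δ : ℝ))
  have hf : Summable f := Real.summable_nat_rpow.2 (by simpa using hδ)
  have hf0 (k : ℕ) : 0 ≤ f k := by positivity
  have hS : 0 ≤ ∑' k, f k := tsum_nonneg hf0
  obtain ⟨c, hc, hrc⟩ := exists_pos_add_mul_le_one (r := r) (by simpa [r] using hδ) hS
  refine ⟨fun k => if k = 0 then ENNReal.ofReal r else ENNReal.ofReal (c * f k), ?_, ?_,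
    ENNReal.ofReal (-Real.log c), ENNReal.ofReal_ne_top, fun k hk => ?_⟩
  · calc ∑' k : ℕ, (if k = 0 then ENNReal.ofReal r else ENNReal.ofReal (c * f k))
        ≤ ∑' k : ℕ, ((if k = 0 then ENNReal.ofReal r else 0) + ENNReal.ofReal (c * f k)) :=
          ENNReal.tsum_le_tsum fun k => by split_ifs <;> simp
      _ = ENNReal.ofReal (r + c * ∑' k, f k) := by
          rw [ENNReal.tsum_add, tsum_ite_eq, ← ENNReal.ofReal_tsum_of_nonneg
            (fun k => mul_nonneg hc.le (hf0 k)) (hf.mul_left c), tsum_mul_left,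
            ENNReal.ofReal_add (Real.exp_pos _).le (mul_nonneg hc.le hS)]
      _ ≤ 1 := ENNReal.ofReal_le_one.2 hrc
  · simp [r, surprisal_ofReal (Real.exp_pos _)]
  · have hk0 : (0 : ℝ) < k := by exact_mod_cast Nat.pos_of_ne_zero hk
    have hlog : -Real.log (c * f k) = -Real.log c + (1 + δ) * Real.log k := by
      rw [Real.log_mul hc.ne' (Real.rpow_pos_of_pos hk0 _).ne', Real.log_rpow hk0]
      ring
    simp only [if_neg hk]
    rw [surprisal_ofReal (mul_pos hc (Real.rpow_pos_of_pos hk0 _)), hlog]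
    refine ENNReal.ofReal_add_le.trans (add_le_add_right (le_of_eq ?_) _)
    rw [ENNReal.ofReal_mul (by positivity), ENNReal.ofReal_add zero_le_one δ.coe_nonneg,
      ENNReal.ofReal_one, ENNReal.ofReal_coe_nnreal]

variable {X : Type*} [mX : MeasurableSpace X] (μ : Measure X) [IsProbabilityMeasure μ]

lemma exists_shEnt_fibers_le {δ : NNReal} (hδ : 0 < δ) :
    ∃ C : ℝ≥0∞, C ≠ ⊤ ∧ ∀ K : X → ℕ, Measurable K → shEnt μ (fun n => K ⁻¹' {n}) ≤
      δ + C * μ {x | K x ≠ 0} + (1 + δ) * ∫⁻ x, ENNReal.ofReal (Real.log (K x)) ∂μ := by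
  obtain ⟨w, hw, hw0, C, hC, hwk⟩ := exists_power_law_weights hδ
  refine ⟨C, hC, fun K hK => ?_⟩
  have hK0 : MeasurableSet {x | K x ≠ 0} := hK (measurableSet_singleton 0).compl
  have hlog : Measurable fun x => ENNReal.ofReal (Real.log (K x)) :=
    (measurable_of_countable fun n : ℕ => ENNReal.ofReal (Real.log n)).comp hK
  have hpt (x : X) : surprisal (w (K x)) ≤ δ + {x | K x ≠ 0}.indicator (fun _ => C) x +
      (1 + δ) * ENNReal.ofReal (Real.log (K x)) := by
    by_cases hx : K x = 0
    · simpa [hx] using hw0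
    · rw [indicator_of_mem (show x ∈ {x | K x ≠ 0} from hx), add_assoc]
      exact (hwk _ hx).trans le_add_self
  calc shEnt μ (fun n => K ⁻¹' {n})
      ≤ ∫⁻ x, surprisal (w (K x)) ∂μ := shEnt_fibers_le_lintegral hK hw
    _ ≤ ∫⁻ x, (δ + {x | K x ≠ 0}.indicator (fun _ => C) x +
          (1 + δ) * ENNReal.ofReal (Real.log (K x))) ∂μ := lintegral_mono hpt
    _ = _ := by
        rw [lintegral_add_right _ (hlog.const_mul _), lintegral_add_left measurable_const,
          lintegral_indicator_const hK0, lintegral_const, measure_univ, mul_one,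
          lintegral_const_mul _ hlog]

lemma ofReal_log_natCast_le (n : ℕ) : ENNReal.ofReal (Real.log n) ≤ n := by
  rw [← ENNReal.ofReal_natCast n]
  exact ENNReal.ofReal_le_ofReal (Real.log_le_self n.cast_nonneg)

lemma exists_shEnt_fibers_le_of_lintegral_le {ε : ℝ≥0∞} (hε : ε ≠ 0) :
    ∃ η : ℝ≥0∞, η ≠ 0 ∧ ∀ t : X → ℕ, Measurable t → ∫⁻ x, (t x : ℝ≥0∞) ∂μ ≤ η →
      shEnt μ (fun n => t ⁻¹' {n}) ≤ ε := by
  obtain ⟨δ, hδ, hδε⟩ := ENNReal.exists_nnreal_pos_mul_lt (ENNReal.ofNat_ne_top (n := 2)) hε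
  obtain ⟨C, hC, hent⟩ := exists_shEnt_fibers_le μ hδ
  have hB : C + (1 + δ) ≠ ⊤ := by finiteness
  obtain ⟨η, hη, hηδ⟩ := ENNReal.exists_nnreal_pos_mul_lt hB (ENNReal.coe_ne_zero.2 hδ.ne')
  refine ⟨η, ENNReal.coe_ne_zero.2 hη.ne', fun t ht htη => ?_⟩
  have hsupp : μ {x | t x ≠ 0} ≤ η := by
    refine le_trans ?_ ((mul_meas_ge_le_lintegral
      ((measurable_of_countable (Nat.cast : ℕ → ℝ≥0∞)).comp ht) 1).trans htη)
    rw [one_mul]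
    exact measure_mono fun x hx => show (1 : ℝ≥0∞) ≤ t x by
      exact_mod_cast Nat.pos_of_ne_zero hx
  have hlog : ∫⁻ x, ENNReal.ofReal (Real.log (t x)) ∂μ ≤ η :=
    (lintegral_mono fun x => ofReal_log_natCast_le (t x)).trans htη
  calc shEnt μ (fun n => t ⁻¹' {n})
      ≤ δ + C * η + (1 + δ) * η := (hent t ht).trans (by gcongr)
    _ = δ + η * (C + (1 + δ)) := by ring
    _ ≤ δ + δ := by gcongr
    _ = δ * 2 := (mul_two _).symm
    _ ≤ ε := hδε.le

end EntropyOfNatValued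

section WeightRank

variable {S : Type*} [Encodable S]

/-- Sorting key of `s`: larger weights come first, ties are broken by the encoding. -/
def weightKey (w : S → ℝ≥0∞) (s : S) : ℝ≥0∞ᵒᵈ ×ₗ ℕ :=
  toLex (OrderDual.toDual (w s), Encodable.encode s)

/-- Position, counted from `1`, of `s` when `S` is listed by decreasing weight. The value is
meaningful only if finitely many elements precede `s`; otherwise it is the junk value `0`. -/
noncomputable def weightRank (w : S → ℝ≥0∞) (s : S) : ℕ :=
  {t | weightKey w t ≤ weightKey w s}.ncard

lemma injective_weightKey (w : S → ℝ≥0∞) : Injective (weightKey w) := fun _ _ h =>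
  Encodable.encode_injective (congrArg (fun p => (ofLex p).2) h)

lemma weightKey_le_iff {w : S → ℝ≥0∞} {s t : S} : weightKey w t ≤ weightKey w s ↔
    w s < w t ∨ w t = w s ∧ Encodable.encode t ≤ Encodable.encode s :=
  Prod.Lex.toLex_le_toLex

lemma setOf_weightKey_le_subset (w : S → ℝ≥0∞) (s : S) :
    {t | weightKey w t ≤ weightKey w s} ⊆ {t | w s ≤ w t} := fun _ ht =>
  (weightKey_le_iff.1 ht).elim le_of_lt fun h => h.1.ge

lemma finite_setOf_weightKey_le {w : S → ℝ≥0∞} (hw : ∑' s, w s ≠ ⊤) {s : S} (hs : w s ≠ 0) :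
    {t | weightKey w t ≤ weightKey w s}.Finite :=
  (ENNReal.finite_const_le_of_tsum_ne_top hw hs).subset (setOf_weightKey_le_subset w s)

lemma weightRank_ne_zero {w : S → ℝ≥0∞} (hw : ∑' s, w s ≠ ⊤) {s : S} (hs : w s ≠ 0) :
    weightRank w s ≠ 0 :=
  Set.ncard_ne_zero_of_mem (a := s) (le_refl (weightKey w s)) (finite_setOf_weightKey_le hw hs)

lemma injOn_weightRank {w : S → ℝ≥0∞} (hw : ∑' s, w s ≠ ⊤) :
    InjOn (weightRank w) {s | w s ≠ 0} := by
  intro s hs t ht hst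
  wlog hle : weightKey w s ≤ weightKey w t generalizing s t
  · exact (this ht hs hst.symm (not_le.1 hle).le).symm
  have heq := Set.eq_of_subset_of_ncard_le (fun _ hr => le_trans hr hle) hst.ge
    (finite_setOf_weightKey_le hw ht)
  have hts : t ∈ {r | weightKey w r ≤ weightKey w s} := heq ▸ le_refl (weightKey w t)
  exact injective_weightKey w (le_antisymm hle hts)

lemma weightRank_mul_le_tsum {w : S → ℝ≥0∞} (hw : ∑' s, w s ≠ ⊤) {s : S} (hs : w s ≠ 0) :
    weightRank w s * w s ≤ ∑' t, w t := by
  have hfin := finite_setOf_weightKey_le hw hs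
  calc weightRank w s * w s = ∑ _t ∈ hfin.toFinset, w s := by
        rw [Finset.sum_const, nsmul_eq_mul, weightRank, Set.ncard_eq_toFinset_card _ hfin]
    _ ≤ ∑ t ∈ hfin.toFinset, w t := Finset.sum_le_sum fun t ht =>
        setOf_weightKey_le_subset w s (hfin.mem_toFinset.1 ht)
    _ ≤ ∑' t, w t := ENNReal.sum_le_tsum _

lemma surprisal_inv_natCast (n : ℕ) :
    surprisal (n : ℝ≥0∞)⁻¹ = ENNReal.ofReal (Real.log n) := by
  rcases Nat.eq_zero_or_pos n with rfl | hn
  · simp [surprisal_eq_zero le_top]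
  · have hn' : (0 : ℝ) < n := by exact_mod_cast hn
    rw [← ENNReal.ofReal_natCast, ← ENNReal.ofReal_inv_of_pos hn',
      surprisal_ofReal (inv_pos.2 hn'), Real.log_inv, neg_neg]

lemma ofReal_log_weightRank_le {w : S → ℝ≥0∞} (hw : ∑' s, w s ≤ 1) (s : S) :
    ENNReal.ofReal (Real.log (weightRank w s)) ≤ surprisal (w s) := by
  rcases eq_or_ne (w s) 0 with hs | hs
  · simp [hs]
  rw [← surprisal_inv_natCast]
  refine antitone_surprisal (ENNReal.le_inv_iff_mul_le.2 ?_)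
  rw [mul_comm]
  exact (weightRank_mul_le_tsum (ne_top_of_le_ne_top ENNReal.one_ne_top hw) hs).trans hw

lemma measurable_weightRank {Y : Type*} {_ : MeasurableSpace Y} {p : Y → S → ℝ≥0∞}
    (hp : ∀ s, Measurable fun y => p y s) (s : S) : Measurable fun y => weightRank (p y) s := by
  refine measurable_ncard.comp (measurable_set_iff.2 fun t => ?_)
  simp only [mem_ofPred_eq, weightKey_le_iff]
  exact measurableSet_setOfPred.1 ((measurableSet_lt (hp s) (hp t)).union
    ((measurableSet_eq_fun (hp t) (hp s)).inter (.const _)))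

end WeightRank

section WordWeight

variable {ι A : Type*} [Zero A]

/-- Weight of the finitely supported word `s`, as if its letters were independent and the
letter in position `k` had weights `v k`. The infimum over finite sets of positions stands for
the infinite product, which decreases when the weights are at most `1`. -/
noncomputable def wordWeight (v : ι → A → ℝ≥0∞) (s : ι →₀ A) : ℝ≥0∞ :=
  ⨅ D : Finset ι, ∏ k ∈ D, v k (s k)

-- Kraft's inequality: all words of a finite set `T` are supported in one finite set `D` of
-- positions, and there the weights multiply out to a product of letter sums.
lemma tsum_wordWeight_le_one {v : ι → A → ℝ≥0∞} (hv : ∀ k, ∑' i, v k i ≤ 1) :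
    ∑' s, wordWeight v s ≤ 1 := by
  classical
  rw [ENNReal.tsum_eq_iSup_sum]
  refine iSup_le fun T => ?_
  set D : Finset ι := T.biUnion Finsupp.support
  let restrict : (ι →₀ A) → D → A := fun s k => s k
  let letters : D → Finset A := fun k => T.image fun s => s k
  have hinj : Set.InjOn restrict T := by
    intro s hs t ht hst
    ext k
    by_cases hk : k ∈ D
    · exact congrFun hst ⟨k, hk⟩
    · simp only [D, Finset.mem_biUnion, Finsupp.mem_support_iff, not_exists, not_and, not_not] at hk
      rw [hk s hs, hk t ht]
  calc ∑ s ∈ T, wordWeight v s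
      ≤ ∑ s ∈ T, ∏ k : D, v k (restrict s k) := Finset.sum_le_sum fun s _ =>
        (iInf_le _ D).trans_eq (Finset.prod_coe_sort D fun k => v k (s k)).symm
    _ = ∑ f ∈ T.image restrict, ∏ k : D, v k (f k) :=
        (Finset.sum_image (f := fun f : D → A => ∏ k : D, v k (f k)) hinj).symm
    _ ≤ ∑ f ∈ Fintype.piFinset letters, ∏ k : D, v k (f k) := by
        refine Finset.sum_le_sum_of_subset fun f hf => ?_
        obtain ⟨s, hs, rfl⟩ := Finset.mem_image.1 hf
        exact Fintype.mem_piFinset.2 fun k => Finset.mem_image.2 ⟨s, hs, rfl⟩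
    _ = ∏ k : D, ∑ i ∈ letters k, v k i := (Finset.prod_univ_sum _ _).symm
    _ ≤ 1 := Finset.prod_le_one' fun k _ => (ENNReal.sum_le_tsum _).trans (hv k)

lemma surprisal_wordWeight_le (v : ι → A → ℝ≥0∞) (s : ι →₀ A) :
    surprisal (wordWeight v s) ≤ ∑' k, surprisal (v k (s k)) := by
  rw [wordWeight, surprisal_iInf]
  exact iSup_le fun D => (surprisal_prod_le D _).trans (ENNReal.sum_le_tsum D)

lemma measurable_wordWeight [Countable ι] {Y : Type*} {_ : MeasurableSpace Y}
    {v : Y → ι → A → ℝ≥0∞} (hv : ∀ k i, Measurable fun y => v y k i) (s : ι →₀ A) :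
    Measurable fun y => wordWeight (v y) s :=
  .iInf fun D => D.measurable_fun_prod fun k _ => hv k (s k)

end WordWeight

section Markers

variable {G X : Type*} [Group G] [MulAction G X]

variable (G) in
/-- The saturation of `S`: the points whose orbit meets `S`. -/
def saturation (S : Set X) : Set X := ⋃ g : G, (g • ·) ⁻¹' S

lemma mem_saturation {S : Set X} {x : X} : x ∈ saturation G S ↔ ∃ g : G, g • x ∈ S := by
  simp only [saturation, mem_iUnion, mem_preimage]

lemma smul_mem_saturation {S : Set X} {g : G} {x : X} :
    g • x ∈ saturation G S ↔ x ∈ saturation G S := by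
  simp only [mem_saturation]
  exact ⟨fun ⟨h, hx⟩ => ⟨h * g, by rwa [mul_smul]⟩,
    fun ⟨h, hx⟩ => ⟨h * g⁻¹, by rwa [mul_smul, inv_smul_smul]⟩⟩

lemma measurableSet_saturation [Countable G] {_ : MeasurableSpace X}
    (hG : ∀ g : G, Measurable (g • · : X → X)) {S : Set X} (hS : MeasurableSet S) :
    MeasurableSet (saturation G S) :=
  .iUnion fun g => hG g hS

variable (G) in
/-- The vanishing sequence of markers of a sequence of sets `S`: the `n`-th step restricts the
marker to `S n` on the orbits where this leaves a point, and to the complement of `S n` on the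
others. -/
def vanishingMarker (S : ℕ → Set X) : ℕ → Set X
  | 0 => univ
  | n + 1 => (vanishingMarker S n ∩ S n) ∪
      (vanishingMarker S n \ saturation G (vanishingMarker S n ∩ S n))

lemma antitone_vanishingMarker (S : ℕ → Set X) : Antitone (vanishingMarker G S) :=
  antitone_nat_of_succ_le fun _ => union_subset inter_subset_left sdiff_subset

lemma saturation_vanishingMarker (S : ℕ → Set X) : ∀ n, saturation G (vanishingMarker G S n) = univ
  | 0 => eq_univ_of_forall fun x => mem_saturation.2 ⟨1, mem_univ _⟩
  | n + 1 => by
    refine eq_univ_of_forall fun x => mem_saturation.2 ?_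
    by_cases hx : x ∈ saturation G (vanishingMarker G S n ∩ S n)
    · obtain ⟨g, hg⟩ := mem_saturation.1 hx
      exact ⟨g, .inl hg⟩
    · obtain ⟨g, hg⟩ := mem_saturation.1 (saturation_vanishingMarker S n ▸ mem_univ x)
      exact ⟨g, .inr ⟨hg, fun h => hx (smul_mem_saturation.1 h)⟩⟩

lemma mem_iff_mem_saturation_of_mem_vanishingMarker_succ {S : ℕ → Set X} {n : ℕ} {x : X}
    (hx : x ∈ vanishingMarker G S (n + 1)) :
    x ∈ S n ↔ x ∈ saturation G (vanishingMarker G S n ∩ S n) := by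
  rcases hx with hx | hx
  · exact iff_of_true hx.2 (mem_saturation.2 ⟨1, by rwa [one_smul]⟩)
  · exact iff_of_false (fun h => hx.2 (mem_saturation.2 ⟨1, by rw [one_smul]; exact ⟨hx.1, h⟩⟩))
      hx.2

lemma measurableSet_vanishingMarker [Countable G] {_ : MeasurableSpace X}
    (hG : ∀ g : G, Measurable (g • · : X → X)) {S : ℕ → Set X} (hS : ∀ n, MeasurableSet (S n)) :
    ∀ n, MeasurableSet (vanishingMarker G S n)
  | 0 => .univ
  | n + 1 =>
    have hn := measurableSet_vanishingMarker hG hS n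
    (hn.inter (hS n)).union (hn.diff (measurableSet_saturation hG (hn.inter (hS n))))

/-- The points `x` for which `k` is the first index with `u k • x ∈ M`. -/
def firstHit (u : ℕ → G) (M : Set X) (k : ℕ) : Set X := disjointed (fun j => (u j • ·) ⁻¹' M) k

/-- The indices `k` such that `(u k)⁻¹ • x` first enters `M` at time `k`, landing on `x`. The
points `(u k)⁻¹ • x` with `k ∈ cell u M x` are those allotted to `x`; there are none unless
`x ∈ M`, and over the points of `M` they partition the saturation of `M`. -/
def cell (u : ℕ → G) (M : Set X) (x : X) : Set ℕ := {k | (u k)⁻¹ • x ∈ firstHit u M k}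

variable {u : ℕ → G} {M : Set X} {x : X} {k : ℕ}

lemma smul_mem_of_mem_firstHit (h : x ∈ firstHit u M k) : u k • x ∈ M := disjointed_subset _ k h

lemma smul_mem_cell (h : x ∈ firstHit u M k) : k ∈ cell u M (u k • x) := by
  simpa only [cell, mem_ofPred_eq, inv_smul_smul] using h

lemma iUnion_firstHit (hu : Surjective u) : ⋃ k, firstHit u M k = saturation G M :=
  iUnion_disjointed.trans (hu.iUnion_comp fun g => (g • ·) ⁻¹' M)

lemma exists_mem_firstHit (hu : Surjective u) (h : x ∈ saturation G M) :
    ∃ k, x ∈ firstHit u M k := by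
  rwa [← iUnion_firstHit hu, mem_iUnion] at h

lemma measurableSet_firstHit {_ : MeasurableSpace X} (hG : ∀ g : G, Measurable (g • · : X → X))
    (hM : MeasurableSet M) (k : ℕ) : MeasurableSet (firstHit u M k) :=
  .disjointed (fun j => hG (u j) hM) k

lemma measurableSet_setOf_mem_cell {_ : MeasurableSpace X}
    (hG : ∀ g : G, Measurable (g • · : X → X)) (hM : MeasurableSet M) (k : ℕ) :
    MeasurableSet {x | k ∈ cell u M x} :=
  hG (u k)⁻¹ (measurableSet_firstHit hG hM k)

variable [MeasurableSpace X] {μ : Measure X}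

-- Mass transport: every point of the saturation sends its mass to the point it is allotted to.
lemma lintegral_tsum_indicator_firstHit (hpmp : IsPmp G μ) (hu : Surjective u)
    (hM : MeasurableSet M) {f : X → ℝ≥0∞} (hf : Measurable f) :
    ∫⁻ x, ∑' k, (firstHit u M k).indicator f ((u k)⁻¹ • x) ∂μ =
      ∫⁻ x in saturation G M, f x ∂μ := by
  have hG (g : G) := (hpmp g).measurable
  have hmeas := measurableSet_firstHit (u := u) hG hM
  calc ∫⁻ x, ∑' k, (firstHit u M k).indicator f ((u k)⁻¹ • x) ∂μ
      = ∑' k, ∫⁻ x, (firstHit u M k).indicator f ((u k)⁻¹ • x) ∂μ :=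
        lintegral_tsum fun k => ((hf.indicator (hmeas k)).comp (hG _)).aemeasurable
    _ = ∑' k, ∫⁻ x in firstHit u M k, f x ∂μ := tsum_congr fun k => by
        rw [(hpmp (u k)⁻¹).lintegral_comp (hf.indicator (hmeas k)), lintegral_indicator (hmeas k)]
    _ = ∫⁻ x in saturation G M, f x ∂μ := by
        rw [← lintegral_iUnion hmeas (disjoint_disjointed _), iUnion_firstHit hu]

lemma ae_finite_cell [IsFiniteMeasure μ] (hpmp : IsPmp G μ) (hu : Surjective u)
    (hM : MeasurableSet M) : ∀ᵐ x ∂μ, (cell u M x).Finite := by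
  have hG (g : G) := (hpmp g).measurable
  have hsum : ∫⁻ x, ∑' k, (firstHit u M k).indicator 1 ((u k)⁻¹ • x) ∂μ ≠ ∞ := by
    rw [lintegral_tsum_indicator_firstHit hpmp hu hM measurable_one]
    simp only [Pi.one_apply, setLIntegral_one]
    exact measure_ne_top _ _
  have hmeas : Measurable fun x => ∑' k, (firstHit u M k).indicator (1 : X → ℝ≥0∞)
      ((u k)⁻¹ • x) :=
    .tsum fun k => (measurable_one.indicator (measurableSet_firstHit hG hM k)).comp (hG _)
  filter_upwards [ae_lt_top hmeas hsum] with x hx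
  refine (ENNReal.finite_const_le_of_tsum_ne_top hx.ne one_ne_zero).subset fun k hk => ?_
  exact (indicator_of_mem (show _ ∈ firstHit u M k from hk) (1 : X → ℝ≥0∞)).ge

-- The cell of a point of `T` lists its whole orbit, which is infinite; so `T` is null.
lemma measure_partialTransversal_eq_zero [Countable G] [IsFiniteMeasure μ] (hpmp : IsPmp G μ)
    (hap : Aperiodic G μ) {T : Set X} (hT : MeasurableSet T)
    (h : ∀ x ∈ T, ∀ g : G, g • x ∈ T → g • x = x) : μ T = 0 := by
  obtain ⟨u, hu⟩ := exists_surjective_nat G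
  rw [measure_eq_zero_iff_ae_notMem]
  filter_upwards [hap, ae_finite_cell hpmp hu hT] with x hinf hfin hx
  refine hinf ((hfin.image fun k => (u k)⁻¹ • x).subset ?_)
  rintro _ ⟨g, rfl⟩
  obtain ⟨k, hk⟩ := exists_mem_firstHit hu
    (mem_saturation.2 ⟨g⁻¹, by rwa [inv_smul_smul]⟩ : g • x ∈ saturation G T)
  have hkx : u k • g • x = x := by
    rw [← mul_smul]
    exact h x hx _ (by simpa only [mul_smul] using smul_mem_of_mem_firstHit hk)
  refine ⟨k, ?_, inv_smul_eq_iff.2 hkx.symm⟩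
  have hmem := smul_mem_cell hk
  rwa [hkx] at hmem

lemma exists_small_marker [Countable G] [MeasurableSpace.CountablySeparated X]
    [IsFiniteMeasure μ] (hpmp : IsPmp G μ) (hap : Aperiodic G μ) {ε : ℝ≥0∞} (hε : ε ≠ 0) :
    ∃ M, MeasurableSet M ∧ μ M ≤ ε ∧ saturation G M = univ := by
  obtain ⟨f, hf, hf_inj⟩ := MeasurableSpace.measurable_injection_nat_bool_of_countablySeparated X
  let S : ℕ → Set X := fun n => (f · n) ⁻¹' {true}
  have hM := measurableSet_vanishingMarker (S := S) (fun g => (hpmp g).measurable)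
    fun n => (measurable_pi_apply n).comp hf (measurableSet_singleton true)
  have hnull : μ (⋂ n, vanishingMarker G S n) = 0 := by
    refine measure_partialTransversal_eq_zero hpmp hap (.iInter hM) fun x hx g hgx => hf_inj ?_
    funext n
    have hS : g • x ∈ S n ↔ x ∈ S n := by
      rw [mem_iff_mem_saturation_of_mem_vanishingMarker_succ (mem_iInter.1 hx (n + 1)),
        mem_iff_mem_saturation_of_mem_vanishingMarker_succ (mem_iInter.1 hgx (n + 1)),
        smul_mem_saturation]
    exact Bool.eq_iff_iff.2 hS
  have htendsto := tendsto_measure_iInter_atTop (fun n => (hM n).nullMeasurableSet)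
    (antitone_vanishingMarker S) ⟨0, measure_ne_top μ _⟩
  rw [hnull] at htendsto
  obtain ⟨n, hn⟩ := (htendsto.eventually (ge_mem_nhds (pos_iff_ne_zero.2 hε))).exists
  exact ⟨_, hM n, hn, saturation_vanishingMarker S n⟩

end Markers

section FactorAlgebras

variable {G X : Type*} [Group G] [MulAction G X] {N F : MeasurableSpace X}

lemma measurableSet_sigmaG {ξ : Set (Set X)} {A : Set X} (hA : A ∈ ξ) :
    MeasurableSet[sigmaG G ξ] A :=
  MeasurableSpace.measurableSet_generateFrom ⟨1, A, hA, by simp only [one_smul, preimage_id']⟩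

lemma sigmaG_le (hN : InvariantAlg G N) {ξ : Set (Set X)} (hξ : ∀ A ∈ ξ, MeasurableSet[N] A) :
    sigmaG G ξ ≤ N := by
  refine MeasurableSpace.generateFrom_le ?_
  rintro _ ⟨g, A, hA, rfl⟩
  exact hN g A (hξ A hA)

lemma invariantAlg_sigmaG (ξ : Set (Set X)) : InvariantAlg G (sigmaG G ξ) := by
  intro g
  refine @measurable_generateFrom _ _ (sigmaG G ξ) _ _ ?_
  rintro _ ⟨h, A, hA, rfl⟩
  refine MeasurableSpace.measurableSet_generateFrom ⟨h * g, A, hA, ?_⟩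
  simp only [preimage_preimage, mul_smul]

lemma InvariantAlg.sup (hN : InvariantAlg G N) (hF : InvariantAlg G F) :
    InvariantAlg G (N ⊔ F) := fun g =>
  sup_le (c := (N ⊔ F).map (g • ·)) (fun A hA => le_sup_left (a := N) _ (hN g A hA))
    (fun A hA => le_sup_right (a := N) _ (hF g A hA))

variable [MeasurableSpace X] {μ : Measure X}

lemma subsetMod_iff {ξ : Set (Set X)} :
    SubsetMod N μ ξ ↔ ∀ A ∈ ξ, MeasurableSet[eventuallyMeasurableSpace N (ae μ)] A := by
  simp only [SubsetMod, measure_symmDiff_eq_zero_iff]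
  rfl

variable (G N μ) in
/-- A factor algebra of `(X, μ)`: a `G`-invariant σ-algebra on `X` that is stable under changes on
null sets. It may contain null-measurable sets that are not Borel. -/
structure IsFactorAlgebra : Prop where
  invariant : InvariantAlg G N
  measurableSet_congr {A B : Set X} (hA : MeasurableSet[N] A) (hAB : A =ᵐ[μ] B) :
    MeasurableSet[N] B

lemma IsFactorAlgebra.measurable_smul (hN : IsFactorAlgebra G N μ) (g : G) :
    Measurable[N, N] (g • · : X → X) :=
  hN.invariant g

lemma InvariantAlg.isFactorAlgebra_eventuallyMeasurableSpace (hN : InvariantAlg G N)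
    (hpmp : IsPmp G μ) : IsFactorAlgebra G (eventuallyMeasurableSpace N (ae μ)) μ where
  invariant := by
    rintro g A ⟨B, hB, hAB⟩
    exact ⟨_, hN g B hB, (hpmp g).quasiMeasurePreserving.preimage_ae_eq hAB⟩
  measurableSet_congr := by
    rintro A B ⟨C, hC, hAC⟩ hAB
    exact ⟨C, hC, hAB.symm.trans hAC⟩

end FactorAlgebras

section BlockCoding

lemma measurable_comp_of_countable {S Y Z : Type*} [Countable S] {_ : MeasurableSpace Y}
    [MeasurableSpace Z] {H : S → Y → Z} (hH : ∀ s, Measurable (H s)) {n : Y → S}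
    (hn : ∀ s, MeasurableSet {y | n y = s}) : Measurable fun y => H (n y) y := by
  intro T hT
  have hpreimage : (fun y => H (n y) y) ⁻¹' T = ⋃ s, {y | n y = s} ∩ H s ⁻¹' T := by
    ext y
    simp
  exact hpreimage ▸ .iUnion fun s => (hn s).inter (hH s hT)

variable {G X : Type*} [Group G] [MulAction G X]

open Classical in
/-- The name of `x`: the word of the labels under `a` of the points allotted to `x`, as long as
these are finitely many. -/
noncomputable def name (u : ℕ → G) (M : Set X) (a : X → ℕ) (x : X) : ℕ →₀ ℕ :=
  if h : (cell u M x).Finite then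
    .ofSupportFinite ((cell u M x).indicator fun k => a ((u k)⁻¹ • x))
      (h.subset support_indicator_subset)
  else 0

open Classical in
/-- The weights of the letters of the name of `x`, when `q i` is the weight of the label `i`.
Positions outside the cell of `x` carry the letter `0` with weight one. -/
noncomputable def letterWeight (u : ℕ → G) (M : Set X) (q : ℕ → X → ℝ≥0∞) (x : X) (k i : ℕ) :
    ℝ≥0∞ :=
  if k ∈ cell u M x then q i ((u k)⁻¹ • x) else (Pi.single 0 1 : ℕ → ℝ≥0∞) i

/-- The weight of the word `s` as a name of `x`. -/
noncomputable def nameWeight (u : ℕ → G) (M : Set X) (q : ℕ → X → ℝ≥0∞) (x : X) :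
    (ℕ →₀ ℕ) → ℝ≥0∞ :=
  wordWeight (letterWeight u M q x)

/-- The code at a point of the marker `M` is the rank of its name among all words, and `0` off
`M`. -/
noncomputable def blockCode (u : ℕ → G) (M : Set X) (a : X → ℕ) (q : ℕ → X → ℝ≥0∞) : X → ℕ :=
  M.indicator fun x => weightRank (nameWeight u M q x) (name u M a x)

variable {u : ℕ → G} {M : Set X} {a : X → ℕ} {q : ℕ → X → ℝ≥0∞} {x : X} {k : ℕ}

lemma name_apply (h : (cell u M x).Finite) (k : ℕ) :
    name u M a x k = (cell u M x).indicator (fun k => a ((u k)⁻¹ • x)) k := by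
  rw [name, dif_pos h]
  rfl

lemma tsum_letterWeight_le_one (hq : ∀ x, ∑' i, q i x ≤ 1) (x : X) (k : ℕ) :
    ∑' i, letterWeight u M q x k i ≤ 1 := by
  by_cases hk : k ∈ cell u M x
  · simpa only [letterWeight, if_pos hk] using hq _
  · simp only [letterWeight, if_neg hk, tsum_pi_single, le_refl]

lemma tsum_nameWeight_le_one (hq : ∀ x, ∑' i, q i x ≤ 1) (x : X) :
    ∑' s, nameWeight u M q x s ≤ 1 :=
  tsum_wordWeight_le_one (tsum_letterWeight_le_one hq x)

lemma surprisal_nameWeight_name_le (h : (cell u M x).Finite) :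
    surprisal (nameWeight u M q x (name u M a x)) ≤
      ∑' k, (firstHit u M k).indicator (fun y => surprisal (q (a y) y)) ((u k)⁻¹ • x) := by
  refine (surprisal_wordWeight_le _ _).trans_eq (tsum_congr fun k => ?_)
  rw [name_apply h]
  by_cases hk : k ∈ cell u M x
  · rw [letterWeight, if_pos hk, indicator_of_mem hk, indicator_of_mem (by exact hk)]
  · rw [letterWeight, if_neg hk, indicator_of_notMem hk, indicator_of_notMem (by exact hk),
      Pi.single_eq_same, surprisal_one]

lemma measurable_nameWeight {_ : MeasurableSpace X} (hG : ∀ g : G, Measurable (g • · : X → X))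
    (hM : MeasurableSet M) (hq : ∀ i, Measurable (q i)) (s : ℕ →₀ ℕ) :
    Measurable fun x => nameWeight u M q x s :=
  measurable_wordWeight (fun k i => .ite (measurableSet_setOf_mem_cell hG hM k)
    ((hq i).comp (hG _)) measurable_const) s

lemma measurableSet_setOf_name_eq {_ : MeasurableSpace X}
    (hG : ∀ g : G, Measurable (g • · : X → X)) (hM : MeasurableSet M) (ha : Measurable a)
    (s : ℕ →₀ ℕ) : MeasurableSet {x | name u M a x = s} := by
  classical
  have hcell : Measurable (cell u M) :=
    measurable_set_iff.2 fun k => measurableSet_setOfPred.1 (measurableSet_setOf_mem_cell hG hM k)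
  have hfinite : MeasurableSet {x | (cell u M x).Finite} := by
    have hcountable : {S : Set ℕ | S.Finite}.Countable := by
      simpa only [subset_univ, and_true] using countable_ofPred_finite_subset countable_univ
    exact hcell hcountable.measurableSet
  have happly (k : ℕ) : Measurable fun x => name u M a x k := by
    have hname : (fun x => name u M a x k) = fun x => if (cell u M x).Finite then
        if k ∈ cell u M x then a ((u k)⁻¹ • x) else 0 else 0 := by
      funext x
      split_ifs with h hk
      · rw [name_apply h, indicator_of_mem hk]
      · rw [name_apply h, indicator_of_notMem hk]
      · rw [name, dif_neg h, Finsupp.zero_apply]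
    exact hname ▸ .ite hfinite (.ite (measurableSet_setOf_mem_cell hG hM k) (ha.comp (hG _))
      measurable_const) measurable_const
  simp only [Finsupp.ext_iff, ofPred_forall]
  exact .iInter fun k => happly k (measurableSet_singleton (s k))

lemma measurable_blockCode {_ : MeasurableSpace X} (hG : ∀ g : G, Measurable (g • · : X → X))
    (hM : MeasurableSet M) (ha : Measurable a) (hq : ∀ i, Measurable (q i)) :
    Measurable (blockCode u M a q) :=
  .indicator (measurable_comp_of_countable (H := fun s x => weightRank (nameWeight u M q x) s)
    (fun s => measurable_weightRank (measurable_nameWeight hG hM hq) s)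
    (measurableSet_setOf_name_eq hG hM ha)) hM

lemma blockCode_ne_zero_iff (hq : ∀ x, ∑' i, q i x ≤ 1)
    (hx : nameWeight u M q x (name u M a x) ≠ 0) : blockCode u M a q x ≠ 0 ↔ x ∈ M := by
  refine ⟨mem_of_indicator_ne_zero, fun hxM => ?_⟩
  rw [blockCode, indicator_of_mem hxM]
  exact weightRank_ne_zero (ne_top_of_le_ne_top ENNReal.one_ne_top (tsum_nameWeight_le_one hq x)) hx

lemma blockCode_eq_weightRank_iff (hq : ∀ x, ∑' i, q i x ≤ 1)
    (hx : nameWeight u M q x (name u M a x) ≠ 0) (hxM : x ∈ M) {s : ℕ →₀ ℕ}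
    (hs : nameWeight u M q x s ≠ 0) :
    blockCode u M a q x = weightRank (nameWeight u M q x) s ↔ name u M a x = s := by
  rw [blockCode, indicator_of_mem hxM]
  exact (injOn_weightRank (ne_top_of_le_ne_top ENNReal.one_ne_top
    (tsum_nameWeight_le_one hq x))).eq_iff hx hs

variable {N m mX : MeasurableSpace X} {μ : Measure X}

lemma lintegral_surprisal_nameWeight_name_le [IsFiniteMeasure μ] (hpmp : IsPmp G μ)
    (hu : Surjective u) (hM : MeasurableSet M) (ha : Measurable a) (hq : ∀ i, Measurable (q i)) :
    ∫⁻ x, surprisal (nameWeight u M q x (name u M a x)) ∂μ ≤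
      ∫⁻ x, surprisal (q (a x) x) ∂μ := by
  have hmeas : Measurable fun x => surprisal (q (a x) x) :=
    measurable_surprisal.comp (measurable_comp_of_countable hq fun i =>
      ha (measurableSet_singleton i))
  calc ∫⁻ x, surprisal (nameWeight u M q x (name u M a x)) ∂μ
      ≤ ∫⁻ x, ∑' k, (firstHit u M k).indicator (fun y => surprisal (q (a y) y))
          ((u k)⁻¹ • x) ∂μ :=
        lintegral_mono_ae ((ae_finite_cell hpmp hu hM).mono fun _ => surprisal_nameWeight_name_le)
    _ = ∫⁻ x in saturation G M, surprisal (q (a x) x) ∂μ :=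
        lintegral_tsum_indicator_firstHit hpmp hu hM hmeas
    _ ≤ ∫⁻ x, surprisal (q (a x) x) ∂μ := setLIntegral_le_lintegral _ _

lemma lintegral_ofReal_log_blockCode_le [IsFiniteMeasure μ] (hpmp : IsPmp G μ)
    (hu : Surjective u) (hM : MeasurableSet M) (ha : Measurable a) (hq : ∀ i, Measurable (q i))
    (hq_le : ∀ x, ∑' i, q i x ≤ 1) :
    ∫⁻ x, ENNReal.ofReal (Real.log (blockCode u M a q x)) ∂μ ≤
      ∫⁻ x, surprisal (q (a x) x) ∂μ := by
  refine (lintegral_mono fun x => ?_).trans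
    (lintegral_surprisal_nameWeight_name_le hpmp hu hM ha hq)
  by_cases hx : x ∈ M
  · rw [blockCode, indicator_of_mem hx]
    exact ofReal_log_weightRank_le (tsum_nameWeight_le_one hq_le x) _
  · simp [blockCode, hx]

lemma ae_nameWeight_name_ne_zero [IsFiniteMeasure μ] (hpmp : IsPmp G μ)
    (hu : Surjective u) (hM : MeasurableSet M) (ha : Measurable a) (hq : ∀ i, Measurable (q i))
    (hfin : ∫⁻ x, surprisal (q (a x) x) ∂μ ≠ ∞) :
    ∀ᵐ x ∂μ, nameWeight u M q x (name u M a x) ≠ 0 := by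
  have hG (g : G) := (hpmp g).measurable
  have hmeas : Measurable fun x => surprisal (nameWeight u M q x (name u M a x)) :=
    measurable_surprisal.comp (measurable_comp_of_countable
      (H := fun s x => nameWeight u M q x s) (measurable_nameWeight hG hM hq)
      (measurableSet_setOf_name_eq hG hM ha))
  filter_upwards [ae_lt_top hmeas (ne_top_of_le_ne_top hfin
    (lintegral_surprisal_nameWeight_name_le hpmp hu hM ha hq))] with x hx hzero
  exact hx.ne (hzero ▸ surprisal_zero)

lemma measurableSet_marker_of_blockCode (hN : IsFactorAlgebra G N μ)
    (hNK : Measurable[N] (blockCode u M a q)) (hq : ∀ x, ∑' i, q i x ≤ 1)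
    (hne : ∀ᵐ x ∂μ, nameWeight u M q x (name u M a x) ≠ 0) : MeasurableSet[N] M := by
  refine hN.measurableSet_congr (hNK (measurableSet_singleton 0).compl) ?_
  filter_upwards [hne] with x hx using propext (blockCode_ne_zero_iff hq hx)

lemma measurableSet_name_of_blockCode (hN : IsFactorAlgebra G N μ)
    (hNq : ∀ i, Measurable[N] (q i)) (hNK : Measurable[N] (blockCode u M a q))
    (hq : ∀ x, ∑' i, q i x ≤ 1) (hne : ∀ᵐ x ∂μ, nameWeight u M q x (name u M a x) ≠ 0)
    (s : ℕ →₀ ℕ) : MeasurableSet[N] (M ∩ {x | name u M a x = s}) := by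
  have hM := measurableSet_marker_of_blockCode hN hNK hq hne
  have hw := measurable_nameWeight (u := u) hN.measurable_smul hM hNq
  refine hN.measurableSet_congr (hM.inter ((hw s (measurableSet_singleton 0).compl).inter
    (measurableSet_eq_fun hNK (measurable_weightRank hw s)))) ?_
  filter_upwards [hne] with x hx
  refine propext (and_congr_right fun hxM => ⟨fun ⟨hs, h⟩ => ?_, fun h => ⟨h ▸ hx, ?_⟩⟩)
  · exact (blockCode_eq_weightRank_iff hq hx hxM hs).1 h
  · exact (blockCode_eq_weightRank_iff hq hx hxM (h ▸ hx)).2 h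

-- A point of `firstHit u M k` finds its own label in position `k` of the name of `u k • x`.
lemma measurable_of_blockCode [IsFiniteMeasure μ] (hN : IsFactorAlgebra G N μ)
    (hNq : ∀ i, Measurable[N] (q i)) (hNK : Measurable[N] (blockCode u M a q))
    (hq : ∀ x, ∑' i, q i x ≤ 1) (hne : ∀ᵐ x ∂μ, nameWeight u M q x (name u M a x) ≠ 0)
    (hpmp : IsPmp G μ) (hu : Surjective u) (hM : MeasurableSet M)
    (hM_univ : saturation G M = univ) : Measurable[N] a := by
  have hNM := measurableSet_marker_of_blockCode hN hNK hq hne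
  have hname := measurableSet_name_of_blockCode hN hNq hNK hq hne
  have hfin : ∀ᵐ x ∂μ, ∀ k, (cell u M (u k • x)).Finite := ae_all_iff.2 fun k =>
    (hpmp (u k)).quasiMeasurePreserving.ae (ae_finite_cell hpmp hu hM)
  refine @measurable_to_countable' _ _ _ _ N _ fun i => ?_
  refine hN.measurableSet_congr (MeasurableSet.iUnion fun k =>
    (measurableSet_firstHit (u := u) hN.measurable_smul hNM k).inter
      (hN.measurable_smul (u k) (.biUnion {s : ℕ →₀ ℕ | s k = i}.to_countable fun s _ => hname s)))
    ?_
  filter_upwards [hfin] with x hx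
  have hlabel {k : ℕ} (hk : x ∈ firstHit u M k) : name u M a (u k • x) k = a x := by
    rw [name_apply (hx k), indicator_of_mem (smul_mem_cell hk), inv_smul_smul]
  refine propext ⟨fun h => ?_, fun h => ?_⟩
  · obtain ⟨k, hk, h⟩ := mem_iUnion.1 h
    obtain ⟨s, hs, -, rfl⟩ := mem_iUnion₂.1 h
    exact (hlabel hk).symm.trans hs
  · obtain ⟨k, hk⟩ := exists_mem_firstHit hu (hM_univ ▸ mem_univ x)
    exact mem_iUnion.2 ⟨k, hk, mem_iUnion₂.2
      ⟨_, (hlabel hk).trans h, smul_mem_of_mem_firstHit hk, rfl⟩⟩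

lemma exists_code_shEnt_le_condEnt_add [Countable G] [MeasurableSpace.CountablySeparated X]
    [IsProbabilityMeasure μ] (hpmp : IsPmp G μ) (hap : Aperiodic G μ) (hm : m ≤ mX)
    (ha : Measurable a) (hfin : condEnt m μ (fun i => a ⁻¹' {i}) ≠ ∞) {ε : ℝ≥0∞} (hε : ε ≠ 0) :
    ∃ K : X → ℕ, Measurable K ∧
      shEnt μ (fun n => K ⁻¹' {n}) ≤ condEnt m μ (fun i => a ⁻¹' {i}) + ε ∧
      ∀ N, IsFactorAlgebra G N μ → m ≤ N → Measurable[N] K → Measurable[N] a := by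
  set h := condEnt m μ fun i => a ⁻¹' {i}
  obtain ⟨u, hu⟩ := exists_surjective_nat G
  obtain ⟨q, hqm, hq, hqh⟩ := exists_weights_lintegral_eq_condEnt hm ha (μ := μ)
  have hqX (i : ℕ) : Measurable (q i) := (hqm i).mono hm le_rfl
  obtain ⟨δ, hδ, hδε⟩ := ENNReal.exists_nnreal_pos_mul_lt (a := 2 + h) (by simpa using hfin) hε
  obtain ⟨C, hC, hCK⟩ := exists_shEnt_fibers_le μ hδ
  obtain ⟨η, hη, hηδ⟩ := ENNReal.exists_nnreal_pos_mul_lt hC (ENNReal.coe_ne_zero.2 hδ.ne')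
  obtain ⟨M, hM, hMη, hM_univ⟩ :=
    exists_small_marker hpmp hap (ENNReal.coe_ne_zero.2 hη.ne')
  have hK := measurable_blockCode (u := u) (fun g => (hpmp g).measurable) hM ha hqX
  have hqfin : ∫⁻ x, surprisal (q (a x) x) ∂μ ≠ ∞ := hqh ▸ hfin
  refine ⟨blockCode u M a q, hK, ?_, fun N hN hmN hNK => measurable_of_blockCode hN
    (fun i => (hqm i).mono hmN le_rfl) hNK hq
    (ae_nameWeight_name_ne_zero hpmp hu hM ha hqX hqfin) hpmp hu hM hM_univ⟩
  calc shEnt μ (fun n => blockCode u M a q ⁻¹' {n})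
      ≤ δ + C * μ {x | blockCode u M a q x ≠ 0} +
          (1 + δ) * ∫⁻ x, ENNReal.ofReal (Real.log (blockCode u M a q x)) ∂μ := hCK _ hK
    _ ≤ δ + δ + (1 + δ) * h := by
        gcongr
        · calc C * μ {x | blockCode u M a q x ≠ 0}
              ≤ C * η := by
                gcongr
                exact (measure_mono fun x => mem_of_indicator_ne_zero).trans hMη
            _ ≤ δ := (mul_comm _ _).trans_le hηδ.le
        · exact (lintegral_ofReal_log_blockCode_le hpmp hu hM ha hqX hq).trans_eq hqh
    _ = h + δ * (2 + h) := by ring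
    _ ≤ h + ε := by gcongr

end BlockCoding

section InvariantCoding

lemma measurableSet_eventuallyMeasurableSpace_of_aestronglyMeasurable_indicator {X : Type*}
    {m mX : MeasurableSpace X} {μ : Measure X} {A : Set X}
    (hA : AEStronglyMeasurable[m] (A.indicator fun _ => (1 : ℝ)) μ) :
    MeasurableSet[eventuallyMeasurableSpace m (ae μ)] A := by
  obtain ⟨f, hf, hAf⟩ := hA
  refine ⟨f ⁻¹' {1}, hf.measurable (measurableSet_singleton 1), ?_⟩
  filter_upwards [hAf] with x hx
  refine propext (?_ : x ∈ A ↔ f x = 1)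
  rw [← hx]
  exact (indicator_eq_one_iff_mem ℝ).symm

-- The classes of the sets of `J` form a separable subset of `L¹`, where `m`-measurability is a
-- closed condition.
lemma exists_seq_generating_mod_null {X : Type*} [mX : MeasurableSpace X]
    [MeasurableSpace.CountablyGenerated X] (μ : Measure X) [IsFiniteMeasure μ] {J : Set (Set X)}
    (hJ : ∀ A ∈ J, MeasurableSet A) (hJ_nonempty : J.Nonempty) :
    ∃ C : ℕ → Set X, (∀ j, C j ∈ J) ∧ ∀ m ≤ mX,
      (∀ j, MeasurableSet[eventuallyMeasurableSpace m (ae μ)] (C j)) →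
        ∀ A ∈ J, MeasurableSet[eventuallyMeasurableSpace m (ae μ)] A := by
  have : Nonempty J := hJ_nonempty.to_subtype
  have : Fact ((1 : ℝ≥0∞) ≠ ∞) := ⟨ENNReal.one_ne_top⟩
  let toLp (A : J) : Lp ℝ 1 μ := indicatorConstLp 1 (hJ A A.2) (measure_ne_top μ _) 1
  have htoLp (A : J) {B : Set X} (hAB : (A : Set X) =ᵐ[μ] B) :
      toLp A =ᵐ[μ] B.indicator fun _ => 1 :=
    indicatorConstLp_coeFn.trans (indicator_ae_eq_of_ae_eq_set hAB)
  have hsep := (TopologicalSpace.IsSeparable.of_separableSpace (range toLp)).separableSpace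
  obtain ⟨d, hd⟩ := TopologicalSpace.exists_dense_seq (range toLp)
  choose C hC using fun n => (d n).2
  refine ⟨fun j => C j, fun j => (C j).2, fun m hm hCm A hA => ?_⟩
  have hclosed := isClosed_aestronglyMeasurable (F := ℝ) (p := 1) (μ := μ) hm
  have hsub : range ((↑) ∘ d) ⊆ {f : Lp ℝ 1 μ | AEStronglyMeasurable[m] f μ} := by
    rintro _ ⟨j, rfl⟩
    obtain ⟨B, hB, hCB⟩ := hCm j
    refine ⟨B.indicator fun _ => 1, stronglyMeasurable_const.indicator hB, ?_⟩
    rw [comp_apply, ← hC]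
    exact htoLp (C j) hCB
  have hmem : toLp ⟨A, hA⟩ ∈ closure (range ((↑) ∘ d)) := by
    rw [range_comp]
    exact closure_subtype.1 (hd ⟨toLp ⟨A, hA⟩, mem_range_self _⟩)
  exact measurableSet_eventuallyMeasurableSpace_of_aestronglyMeasurable_indicator
    ((closure_minimal hsub hclosed hmem).congr (htoLp ⟨A, hA⟩ .rfl))

section BinaryCode

variable {X : Type*} {E : ℕ → Set X}

/-- The number whose binary digits are the indicators of the sets `E i`. At a point lying in
infinitely many of them the sum diverges, and the value is `0`. -/
noncomputable def binaryCode (E : ℕ → Set X) (x : X) : ℕ :=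
  ∑' i, (E i).indicator (fun _ => 2 ^ i) x

lemma testBit_binaryCode {x : X} (hx : {i | x ∈ E i}.Finite) (i : ℕ) :
    (binaryCode E x).testBit i ↔ x ∈ E i := by
  have hmem (j : ℕ) : j ∈ hx.toFinset ↔ x ∈ E j := hx.mem_toFinset
  have hcode : binaryCode E x = ∑ j ∈ hx.toFinset, 2 ^ j := by
    rw [binaryCode, tsum_eq_sum (s := hx.toFinset)
      fun j hj => indicator_of_notMem (mt (hmem j).2 hj) _]
    exact Finset.sum_congr rfl fun j hj => indicator_of_mem ((hmem j).1 hj) _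
  rw [hcode, ← Nat.mem_bitIndices, ← List.mem_toFinset, Finset.toFinset_bitIndices_sum_two_pow,
    hmem]

lemma natCast_binaryCode_le (E : ℕ → Set X) (x : X) :
    (binaryCode E x : ℝ≥0∞) ≤ ∑' i, (E i).indicator (fun _ => 2 ^ i) x := by
  by_cases hsum : Summable fun i => (E i).indicator (fun _ => 2 ^ i) x
  · refine ((hsum.hasSum.map (Nat.castAddMonoidHom ℝ≥0∞)
      continuous_of_discreteTopology).tsum_eq.symm.trans (tsum_congr fun i => ?_)).le
    by_cases hi : x ∈ E i <;> simp [hi]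
  · simp [binaryCode, tsum_eq_zero_of_not_summable hsum]

variable [MeasurableSpace X] {μ : Measure X}

lemma measurable_binaryCode (hE : ∀ i, MeasurableSet (E i)) : Measurable (binaryCode E) :=
  Measurable.tsum fun i => measurable_const.indicator (hE i)

lemma lintegral_binaryCode_le (hE : ∀ i, MeasurableSet (E i)) :
    ∫⁻ x, (binaryCode E x : ℝ≥0∞) ∂μ ≤ ∑' i, 2 ^ i * μ (E i) :=
  calc ∫⁻ x, (binaryCode E x : ℝ≥0∞) ∂μ
      ≤ ∫⁻ x, ∑' i, (E i).indicator (fun _ => 2 ^ i) x ∂μ :=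
        lintegral_mono (natCast_binaryCode_le E)
    _ = ∑' i, ∫⁻ x, (E i).indicator (fun _ => 2 ^ i) x ∂μ :=
        lintegral_tsum fun i => (measurable_const.indicator (hE i)).aemeasurable
    _ = ∑' i, 2 ^ i * μ (E i) := tsum_congr fun i => lintegral_indicator_const (hE i) _

lemma setOf_testBit_binaryCode_ae_eq (hE : ∑' i, 2 ^ i * μ (E i) ≠ ∞) (i : ℕ) :
    {x | (binaryCode E x).testBit i} =ᵐ[μ] E i := by
  have hE' : ∑' i, μ (E i) ≠ ∞ := ne_top_of_le_ne_top hE <| ENNReal.tsum_le_tsum fun i =>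
    le_mul_of_one_le_left' (one_le_pow₀ one_le_two)
  filter_upwards [ae_finite_setOfPred_mem hE'] with x hx
  exact propext (testBit_binaryCode hx i)

end BinaryCode

variable {G X : Type*} [Group G] [MulAction G X]

lemma saturation_inter_eq_of_invariant {M C : Set X} (hM : saturation G M = univ)
    (hC : ∀ g : G, (g • ·) ⁻¹' C = C) : saturation G (M ∩ C) = C := by
  have hsmul (g : G) (x : X) : g • x ∈ C ↔ x ∈ C := Set.ext_iff.1 (hC g) x
  ext x
  obtain ⟨g, hg⟩ := mem_saturation.1 (hM ▸ mem_univ x : x ∈ saturation G M)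
  refine mem_saturation.trans ⟨fun ⟨h, _, hx⟩ => (hsmul h x).1 hx, fun hx => ?_⟩
  exact ⟨g, hg, (hsmul g x).2 hx⟩

lemma IsFactorAlgebra.measurableSet_of_eventuallyMeasurableSpace_inf {N mX : MeasurableSpace X}
    {μ : Measure X} (hN : IsFactorAlgebra G N μ) {A : Set X}
    (hA : MeasurableSet[eventuallyMeasurableSpace (N ⊓ mX) (ae μ)] A) : MeasurableSet[N] A := by
  obtain ⟨B, hB, hAB⟩ := hA
  exact hN.measurableSet_congr (MeasurableSpace.measurableSet_inf.1 hB).1 hAB.symm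

variable [Countable G]

lemma exists_small_markers [MeasurableSpace X] [MeasurableSpace.CountablySeparated X]
    {μ : Measure X} [IsFiniteMeasure μ] (hpmp : IsPmp G μ) (hap : Aperiodic G μ)
    {ε : ℝ≥0∞} (hε : ε ≠ 0) :
    ∃ M : ℕ → Set X, (∀ i, MeasurableSet (M i)) ∧ (∀ i, saturation G (M i) = univ) ∧
      ∑' i, 2 ^ i * μ (M i) ≤ ε := by
  obtain ⟨δ, hδ, hδε⟩ := ENNReal.exists_pos_sum_of_countable' hε ℕ
  choose M hM hMδ hMuniv using fun i : ℕ =>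
    exists_small_marker (ε := δ i / 2 ^ i) hpmp hap
      (ENNReal.div_ne_zero.2 ⟨(hδ i).ne', by finiteness⟩)
  refine ⟨M, hM, hMuniv, (ENNReal.tsum_le_tsum fun i => ?_).trans hδε.le⟩
  calc 2 ^ i * μ (M i) ≤ 2 ^ i * (δ i / 2 ^ i) := by gcongr; exact hMδ i
    _ = δ i := ENNReal.mul_div_cancel (by simp) (by finiteness)

variable {N mX : MeasurableSpace X} {μ : Measure X}

lemma measurableSet_of_measurable_binaryCode (hN : IsFactorAlgebra G N μ) {M C : ℕ → Set X}
    (hM : ∀ i, saturation G (M i) = univ) (hC : ∀ i, ∀ g : G, (g • ·) ⁻¹' C i = C i)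
    (hsum : ∑' i, 2 ^ i * μ (M i ∩ C i) ≠ ∞)
    (hcode : Measurable[N] (binaryCode fun i => M i ∩ C i)) (i : ℕ) : MeasurableSet[N] (C i) := by
  rw [← saturation_inter_eq_of_invariant (hM i) (hC i)]
  exact measurableSet_saturation hN.measurable_smul (hN.measurableSet_congr
    (hcode (.of_discrete (s := {n : ℕ | n.testBit i}))) (setOf_testBit_binaryCode_ae_eq hsum i))

-- A marker meets every orbit, so an invariant set is recovered from its trace on a marker; small
-- markers make these traces cheap to encode.
lemma exists_code_invSigma [MeasurableSpace.CountablyGenerated X]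
    [MeasurableSpace.SeparatesPoints X] [IsProbabilityMeasure μ]
    (hpmp : IsPmp G μ) (hap : Aperiodic G μ) {ε : ℝ≥0∞} (hε : ε ≠ 0) :
    ∃ t : X → ℕ, Measurable t ∧ shEnt μ (fun n => t ⁻¹' {n}) ≤ ε ∧
      ∀ N, IsFactorAlgebra G N μ → Measurable[N] t → invSigma G X ≤ N := by
  obtain ⟨η, hη, hηε⟩ := exists_shEnt_fibers_le_of_lintegral_le μ hε
  obtain ⟨M, hM, hMuniv, hMη⟩ := exists_small_markers hpmp hap
    (lt_min (pos_of_ne_zero hη) one_pos).ne'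
  obtain ⟨C, hC, hCgen⟩ := exists_seq_generating_mod_null μ
    (J := {A | MeasurableSet A ∧ ∀ g : G, (fun x => g • x) ⁻¹' A = A}) (fun A hA => hA.1)
    ⟨∅, MeasurableSet.empty, fun _ => rfl⟩
  have hE (i : ℕ) : MeasurableSet (M i ∩ C i) := (hM i).inter (hC i).1
  have hsum : ∑' i, 2 ^ i * μ (M i ∩ C i) ≤ min η 1 :=
    (ENNReal.tsum_le_tsum fun i => by gcongr; exact inter_subset_left).trans hMη
  have hsum_ne_top := ne_top_of_le_ne_top ENNReal.one_ne_top (hsum.trans (min_le_right _ _))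
  refine ⟨binaryCode fun i => M i ∩ C i, measurable_binaryCode hE,
    hηε _ (measurable_binaryCode hE) ((lintegral_binaryCode_le hE).trans
      (hsum.trans (min_le_left _ _))),
    fun N hN hcode => MeasurableSpace.generateFrom_le fun A hA => ?_⟩
  have hCN := measurableSet_of_measurable_binaryCode hN hMuniv (fun i => (hC i).2) hsum_ne_top hcode
  exact hN.measurableSet_of_eventuallyMeasurableSpace_inf <|
    hCgen _ inf_le_right (fun j => le_eventuallyMeasurableSpace _ <|
      MeasurableSpace.measurableSet_inf.2 ⟨hCN j, (hC j).1⟩) A hA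

end InvariantCoding

section Partitions

variable {X : Type*} [MeasurableSpace X]

lemma isPartition_preimage_singleton {a : X → ℕ} (ha : Measurable a) :
    IsPartition fun n => a ⁻¹' {n} :=
  ⟨fun n => ha (measurableSet_singleton n), pairwise_disjoint_fiber a,
    iUnion_eq_univ_iff.2 fun x => ⟨a x, rfl⟩⟩

lemma IsPartition.exists_eq_preimage_singleton {α : ℕ → Set X} (hα : IsPartition α) :
    ∃ a : X → ℕ, Measurable a ∧ α = fun i => a ⁻¹' {i} := by
  obtain ⟨hα_meas, hα_disj, hα_univ⟩ := hα
  choose a ha using fun x => mem_iUnion.1 (hα_univ ▸ mem_univ x : x ∈ ⋃ i, α i)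
  have hfiber (i : ℕ) : α i = a ⁻¹' {i} := by
    ext x
    exact ⟨fun hx => hα_disj.eq (not_disjoint_iff.2 ⟨x, ha x, hx⟩), fun hx => hx ▸ ha x⟩
  exact ⟨a, measurable_to_countable' fun i => hfiber i ▸ hα_meas i, funext hfiber⟩

end Partitions

section OuterRokhlin

lemma measurable_sigmaG_fibers {G X : Type*} [Group G] [MulAction G X] (b : X → ℕ) :
    Measurable[sigmaG G (range fun n => b ⁻¹' {n})] b :=
  @measurable_to_countable' _ _ _ _ (sigmaG G _) _ fun n => measurableSet_sigmaG ⟨n, rfl⟩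

lemma sigmaG_fibers_le {G X : Type*} [Group G] [MulAction G X] {N : MeasurableSpace X}
    (hN : InvariantAlg G N) {a : X → ℕ} (ha : Measurable a) :
    sigmaG G (range fun i => a ⁻¹' {i}) ≤ N :=
  sigmaG_le hN (forall_mem_range.2 fun i => ha (measurableSet_singleton i))

lemma measurable_natPair_iff {X : Type*} {_ : MeasurableSpace X} {K t : X → ℕ} :
    (Measurable fun x => Nat.pair (K x) (t x)) ↔ Measurable K ∧ Measurable t := by
  constructor
  · intro h
    have hunpair := (Measurable.of_discrete (f := Nat.unpair)).comp h
    simp only [comp_def, Nat.unpair_pair] at hunpair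
    exact ⟨hunpair.fst, hunpair.snd⟩
  · rintro ⟨hK, ht⟩
    exact (Measurable.of_discrete (f := fun p : ℕ × ℕ => p.1.pair p.2)).comp (hK.prodMk ht)

lemma subsetMod_of_le_eventuallyMeasurableSpace {X : Type*} {M N mX : MeasurableSpace X}
    {μ : Measure X} {ξ : Set (Set X)} (hξ : SubsetMod M μ ξ)
    (hMN : M ≤ eventuallyMeasurableSpace N (ae μ)) : SubsetMod N μ ξ := by
  rw [subsetMod_iff] at hξ ⊢
  intro A hA
  obtain ⟨B, hB, hAB⟩ := hξ A hA
  obtain ⟨C, hC, hBC⟩ := hMN B hB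
  exact ⟨C, hC, hAB.trans hBC⟩

variable {G X : Type*} {F : MeasurableSpace X} [Group G] [MulAction G X] [mX : MeasurableSpace X]
  {μ : Measure X}

lemma invSigma_le : invSigma G X ≤ mX := MeasurableSpace.generateFrom_le fun _ hA => hA.1

lemma exists_isPartition_shEnt_le_condEnt_add [Countable G] [MeasurableSpace.CountablyGenerated X]
    [MeasurableSpace.SeparatesPoints X] [IsProbabilityMeasure μ] (hpmp : IsPmp G μ)
    (hap : Aperiodic G μ) (hF : F ≤ mX) (hFinv : InvariantAlg G F) {α : ℕ → Set X}
    (hα : IsPartition α) (hfin : condEnt (F ⊔ invSigma G X) μ α ≠ ∞) {ε : ℝ≥0∞} (hε : ε ≠ 0) :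
    ∃ β : ℕ → Set X, IsPartition β ∧
      sigmaG G (range α) ⊔ F ⊔ invSigma G X ≤
        eventuallyMeasurableSpace (sigmaG G (range β) ⊔ F) (ae μ) ∧
      shEnt μ β ≤ condEnt (F ⊔ invSigma G X) μ α + ε := by
  obtain ⟨a, ha, rfl⟩ := hα.exists_eq_preimage_singleton
  have hε2 : ε / 2 ≠ 0 := (ENNReal.half_pos hε).ne'
  obtain ⟨K, hK, hKent, hKdecode⟩ :=
    exists_code_shEnt_le_condEnt_add hpmp hap (sup_le hF invSigma_le) ha hfin hε2
  obtain ⟨t, ht, htent, htdecode⟩ := exists_code_invSigma hpmp hap hε2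
  let b x := Nat.pair (K x) (t x)
  have hN : IsFactorAlgebra G
      (eventuallyMeasurableSpace (sigmaG G (range fun n => b ⁻¹' {n}) ⊔ F) (ae μ)) μ :=
    ((invariantAlg_sigmaG _).sup hFinv).isFactorAlgebra_eventuallyMeasurableSpace hpmp
  have hle : sigmaG G (range fun n => b ⁻¹' {n}) ⊔ F ≤
      eventuallyMeasurableSpace (sigmaG G (range fun n => b ⁻¹' {n}) ⊔ F) (ae μ) :=
    le_eventuallyMeasurableSpace
  have hFN := le_sup_right.trans hle
  obtain ⟨hKN, htN⟩ := measurable_natPair_iff.1 <|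
    (measurable_sigmaG_fibers b).mono (le_sup_left.trans hle) le_rfl
  have hinvN := htdecode _ hN htN
  have haN := hKdecode _ hN (sup_le hFN hinvN) hKN
  refine ⟨fun n => b ⁻¹' {n}, isPartition_preimage_singleton (measurable_natPair_iff.2 ⟨hK, ht⟩),
    sup_le (sup_le (sigmaG_fibers_le hN.invariant haN) hFN) hinvN, ?_⟩
  calc shEnt μ (fun n => b ⁻¹' {n})
      ≤ shEnt μ (fun n => K ⁻¹' {n}) + shEnt μ (fun n => t ⁻¹' {n}) := shEnt_fibers_pair_le hK ht
    _ ≤ condEnt (F ⊔ invSigma G X) μ (fun i => a ⁻¹' {i}) + ε / 2 + ε / 2 := by gcongr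
    _ = condEnt (F ⊔ invSigma G X) μ (fun i => a ⁻¹' {i}) + ε := by
      rw [add_assoc, ENNReal.add_halves]

end OuterRokhlin

theorem statement9_general {G X : Type*} (F : MeasurableSpace X) [Group G] [Countable G]
    [mX : MeasurableSpace X] [MeasurableSpace.CountablyGenerated X]
    [MeasurableSpace.SeparatesPoints X] [MulAction G X]
    (μ : Measure X) [IsProbabilityMeasure μ] (hpmp : IsPmp G μ) (hap : Aperiodic G μ)
    (ξ : Set (Set X)) (hF : F ≤ mX) (hFinv : InvariantAlg G F) :
    outerRokhlin G ξ F μ =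
      sInf { h | ∃ α : ℕ → Set X, IsPartition α ∧
        SubsetMod (sigmaG G (Set.range α) ⊔ F) μ ξ ∧ h = shEnt μ α } := by
  apply le_antisymm <;> refine le_sInf ?_
  · rintro _ ⟨β, hβ, hξ, rfl⟩
    have hξ' : SubsetMod (sigmaG G (range β) ⊔ F ⊔ invSigma G X) μ ξ :=
      subsetMod_of_le_eventuallyMeasurableSpace hξ
        (le_sup_left.trans le_eventuallyMeasurableSpace)
    calc outerRokhlin G ξ F μ ≤ condEnt (F ⊔ invSigma G X) μ β := sInf_le ⟨β, hβ, hξ', rfl⟩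
      _ ≤ shEnt μ β := condEnt_le_shEnt (sup_le hF invSigma_le) hβ.1
  · rintro _ ⟨α, hα, hξ, rfl⟩
    by_cases hfin : condEnt (F ⊔ invSigma G X) μ α = ∞
    · exact hfin ▸ le_top
    refine ENNReal.le_of_forall_pos_le_add fun ε hε _ => ?_
    obtain ⟨β, hβ, hle, hβα⟩ := exists_isPartition_shEnt_le_condEnt_add hpmp hap hF hFinv hα hfin
      (ENNReal.coe_ne_zero.2 hε.ne')
    have hξβ := subsetMod_of_le_eventuallyMeasurableSpace hξ hle
    exact sInf_le_of_le ⟨β, hβ, hξβ, rfl⟩ hβα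

/-- Corollary 4.8: for aperiodic actions, the outer Rokhlin entropy is
the infimum of the (unconditioned) Shannon entropies of partitions generating `ξ` over
`F` without the help of the invariant σ-algebra. -/
theorem statement9 {G X : Type*} (F : MeasurableSpace X) [Group G] [Countable G]
    [mX : MeasurableSpace X] [StandardBorelSpace X] [MulAction G X]
    (μ : Measure X) [IsProbabilityMeasure μ] (hpmp : IsPmp G μ) (hap : Aperiodic G μ)
    (ξ : Set (Set X)) (hξm : ∀ A ∈ ξ, MeasurableSet A)
    (hF : F ≤ mX) (hFinv : InvariantAlg G F) :
    outerRokhlin G ξ F μ =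
      sInf { h | ∃ α : ℕ → Set X, IsPartition α ∧
        SubsetMod (sigmaG G (Set.range α) ⊔ F) μ ξ ∧ h = shEnt μ α } :=
  statement9_general F μ hpmp hap ξ hF hFinv
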